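/- Let {X_n, n≥1} satisfy the φ-mixing condition (1) with rate r>2 and constant C>0, and the moment condition (2) with exponent α ∈ (0,1) and ν_α = sup_n E|X_n|^{1+α}. Let c>0, δ ∈ (0,1), p = 2 log(1/δ), φ = Σ_{m=1}^∞ φ(m)^{1/2}, a_1 = √(3cν_α(1+4φ)), β = (αr+1)/((1+α)(1+r)), λ = (r−1)/((1+r)(1+α)), b_n = (n/p)^λ, A = e^{1/4 + √e·C·4^r}, and Y_k = X_k·1(|X_k|≤b_n) − E(X_k·1(|X_k|≤b_n)). Set δ_n = a_1 (p/n)^β. Then there exists n_0 (depending on δ) such that for all n ≥ n_0, P( Σ_{k=1}^n Y_k ≥ n δ_n ) ≤ A δ^c and P( Σ_{k=1}^n Y_k ≤ −n δ_n ) ≤ A δ^c; in particular P( |Σ_{k=1}^n Y_k| ≥ n δ_n ) ≤ 2A δ^c. -/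

import Mathlib

open MeasureTheory ProbabilityTheory Finset

noncomputable def phiCoef {Ω : Type*} [MeasurableSpace Ω] (μ : Measure Ω)
    (X : ℕ → Ω → ℝ) (m : ℕ) : ℝ :=
  sSup {x : ℝ | ∃ k : ℕ, 1 ≤ k ∧ ∃ A B : Set Ω,
    MeasurableSet[⨆ i ∈ Set.Icc 1 k, MeasurableSpace.comap (X i) inferInstance] A ∧
    MeasurableSet[⨆ i ∈ Set.Ici (k + m), MeasurableSpace.comap (X i) inferInstance] B ∧
    0 < μ A ∧
    x = |(μ (B ∩ A)).toReal / (μ A).toReal - (μ B).toReal|}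

noncomputable def phiSum {Ω : Type*} [MeasurableSpace Ω] (μ : Measure Ω)
    (X : ℕ → Ω → ℝ) : ℝ :=
  ∑' m : ℕ, Real.sqrt (phiCoef μ X (m + 1))

noncomputable def tailPart {Ω : Type*} [MeasurableSpace Ω] (μ : Measure Ω)
    (X : ℕ → Ω → ℝ) (b : ℝ) (k : ℕ) (ω : Ω) : ℝ :=
  (if b < |X k ω| then X k ω else 0) - ∫ ω', (if b < |X k ω'| then X k ω' else 0) ∂μ

noncomputable def mainPart {Ω : Type*} [MeasurableSpace Ω] (μ : Measure Ω)
    (X : ℕ → Ω → ℝ) (b : ℝ) (k : ℕ) (ω : Ω) : ℝ :=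
  (if |X k ω| ≤ b then X k ω else 0) - ∫ ω', (if |X k ω'| ≤ b then X k ω' else 0) ∂μ

section Covariance

variable {Ω : Type*} {m₁ m₂ : MeasurableSpace Ω} {mΩ : MeasurableSpace Ω}
  {μ : Measure Ω} [IsProbabilityMeasure μ]

lemma integral_comp_pair_of_finite_range {f g : Ω → ℝ} (hf : Measurable f) (hg : Measurable g)
    (s t : Finset ℝ) (hs : ∀ ω, f ω ∈ s) (ht : ∀ ω, g ω ∈ t) (F : ℝ → ℝ → ℝ) :
    ∫ ω, F (f ω) (g ω) ∂μ = ∑ x ∈ s, ∑ y ∈ t, F x y * μ.real (f ⁻¹' {x} ∩ g ⁻¹' {y}) := by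
  have key : ∀ ω, F (f ω) (g ω) =
      ∑ x ∈ s, ∑ y ∈ t, (f ⁻¹' {x} ∩ g ⁻¹' {y}).indicator (fun _ => F x y) ω := by
    intro ω
    rw [Finset.sum_eq_single_of_mem (f ω) (hs ω), Finset.sum_eq_single_of_mem (g ω) (ht ω)]
    · simp
    · intro y _ hy
      simp [hy.symm]
    · intro x _ hx
      simp [hx.symm]
  have hm : ∀ x y, MeasurableSet (f ⁻¹' {x} ∩ g ⁻¹' {y}) := fun x y =>
    (hf (measurableSet_singleton x)).inter (hg (measurableSet_singleton y))
  simp_rw [key]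
  rw [integral_finsetSum _ fun x _ => integrable_finsetSum _ fun y _ =>
    (integrable_const _).indicator (hm x y)]
  refine Finset.sum_congr rfl fun x _ => ?_
  rw [integral_finsetSum _ fun y _ => (integrable_const _).indicator (hm x y)]
  refine Finset.sum_congr rfl fun y _ => ?_
  rw [integral_indicator_const _ (hm x y), smul_eq_mul, mul_comm]

lemma measureReal_inter_preimage_eq_sum {g : Ω → ℝ} (hg : Measurable g) {A : Set Ω}
    (hA : MeasurableSet A) (t : Finset ℝ) :
    μ.real (A ∩ g ⁻¹' t) = ∑ y ∈ t, μ.real (A ∩ g ⁻¹' {y}) := by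
  rw [← measureReal_biUnion_finset]
  · congr 1
    ext ω
    simp
  · intro x _ y _ hxy
    refine Set.disjoint_left.2 fun ω h1 h2 => hxy ?_
    exact h1.2.symm.trans h2.2
  · exact fun y _ => hA.inter (hg (measurableSet_singleton y))

/-- Joint minus product probabilities of the level sets, summed against a conditioning level:
the total variation is at most twice the mixing coefficient. -/
lemma sum_abs_joint_sub_prod_le (h₁ : m₁ ≤ mΩ) (h₂ : m₂ ≤ mΩ) {φ : ℝ}
    (hφ : ∀ A B, MeasurableSet[m₁] A → MeasurableSet[m₂] B →
      |μ.real (A ∩ B) - μ.real A * μ.real B| ≤ φ * μ.real A)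
    {g : Ω → ℝ} (hg : Measurable[m₂] g) (t : Finset ℝ) {A : Set Ω} (hA : MeasurableSet[m₁] A) :
    ∑ y ∈ t, |μ.real (A ∩ g ⁻¹' {y}) - μ.real A * μ.real (g ⁻¹' {y})| ≤ 2 * φ * μ.real A := by
  have hg' : Measurable g := hg.mono h₂ le_rfl
  set q : ℝ → ℝ := fun y => μ.real (A ∩ g ⁻¹' {y}) - μ.real A * μ.real (g ⁻¹' {y}) with hq
  have hT : ∀ T : Finset ℝ, |∑ y ∈ T, q y| ≤ φ * μ.real A := by
    intro T
    have h := hφ A (g ⁻¹' T) hA (hg T.measurableSet)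
    have h3 := measureReal_inter_preimage_eq_sum (μ := μ) hg' MeasurableSet.univ T
    simp only [Set.univ_inter] at h3
    rw [measureReal_inter_preimage_eq_sum hg' (h₁ _ hA), h3, Finset.mul_sum,
      ← Finset.sum_sub_distrib] at h
    exact h
  rw [← Finset.sum_filter_add_sum_filter_not t (fun y => 0 ≤ q y)]
  have ha : ∑ y ∈ t with 0 ≤ q y, |q y| ≤ φ * μ.real A := by
    rw [Finset.sum_congr rfl fun y hy => abs_of_nonneg (Finset.mem_filter.1 hy).2]
    exact (le_abs_self _).trans (hT _)
  have hb : ∑ y ∈ t with ¬ 0 ≤ q y, |q y| ≤ φ * μ.real A := by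
    rw [Finset.sum_congr rfl fun y hy => abs_of_neg (not_le.1 (Finset.mem_filter.1 hy).2),
      Finset.sum_neg_distrib]
    exact (neg_le_abs _).trans (hT _)
  change (∑ y ∈ t with 0 ≤ q y, |q y|) + (∑ y ∈ t with ¬ 0 ≤ q y, |q y|) ≤ _
  linarith

/-- The two covariance inequalities under `φ`-mixing, for functions with finite range. -/
lemma abs_cov_le_of_finite_range (h₁ : m₁ ≤ mΩ) (h₂ : m₂ ≤ mΩ) {φ : ℝ}
    (hφ0 : 0 ≤ φ)
    (hφ : ∀ A B, MeasurableSet[m₁] A → MeasurableSet[m₂] B →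
      |μ.real (A ∩ B) - μ.real A * μ.real B| ≤ φ * μ.real A)
    {f g : Ω → ℝ} (hf : Measurable[m₁] f) (hg : Measurable[m₂] g)
    (s t : Finset ℝ) (hs : ∀ ω, f ω ∈ s) (ht : ∀ ω, g ω ∈ t) :
    |∫ ω, f ω * g ω ∂μ - (∫ ω, f ω ∂μ) * ∫ ω, g ω ∂μ| ≤
        2 * √φ * √(∫ ω, f ω ^ 2 ∂μ) * √(∫ ω, g ω ^ 2 ∂μ) ∧
    ∀ K, (∀ y ∈ t, |y| ≤ K) →
      |∫ ω, f ω * g ω ∂μ - (∫ ω, f ω ∂μ) * ∫ ω, g ω ∂μ| ≤ 2 * φ * K * ∫ ω, |f ω| ∂μ := by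
  have hf' : Measurable f := hf.mono h₁ le_rfl
  have hg' : Measurable g := hg.mono h₂ le_rfl
  have hmf : ∀ x, MeasurableSet (f ⁻¹' {x}) := fun x => hf' (measurableSet_singleton x)
  have hmg : ∀ x, MeasurableSet (g ⁻¹' {x}) := fun x => hg' (measurableSet_singleton x)
  have hfT : f ⁻¹' (s : Set ℝ) = Set.univ := by ext ω; simpa using hs ω
  have hgT : g ⁻¹' (t : Set ℝ) = Set.univ := by ext ω; simpa using ht ω
  have hα : ∀ x, ∑ y ∈ t, μ.real (f ⁻¹' {x} ∩ g ⁻¹' {y}) = μ.real (f ⁻¹' {x}) := fun x => by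
    rw [← measureReal_inter_preimage_eq_sum hg' (hmf x), hgT, Set.inter_univ]
  have hβ : ∀ y, ∑ x ∈ s, μ.real (f ⁻¹' {x} ∩ g ⁻¹' {y}) = μ.real (g ⁻¹' {y}) := fun y => by
    simp_rw [Set.inter_comm (f ⁻¹' _)]
    rw [← measureReal_inter_preimage_eq_sum hf' (hmg y), hfT, Set.inter_univ]
  have hF : ∀ F : ℝ → ℝ, ∫ ω, F (f ω) ∂μ = ∑ x ∈ s, F x * μ.real (f ⁻¹' {x}) := fun F => by
    rw [integral_comp_pair_of_finite_range hf' hg' s t hs ht (fun x _ => F x)]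
    simp_rw [← Finset.mul_sum, hα]
  have hG : ∀ F : ℝ → ℝ, ∫ ω, F (g ω) ∂μ = ∑ y ∈ t, F y * μ.real (g ⁻¹' {y}) := fun F => by
    rw [integral_comp_pair_of_finite_range hf' hg' s t hs ht (fun _ y => F y), Finset.sum_comm]
    simp_rw [← Finset.mul_sum, hβ]
  have hsum : ∑ x ∈ s, μ.real (f ⁻¹' {x}) = 1 := by
    have := hF (fun _ => 1)
    simpa using this.symm
  set q : ℝ → ℝ → ℝ := fun x y =>
    μ.real (f ⁻¹' {x} ∩ g ⁻¹' {y}) - μ.real (f ⁻¹' {x}) * μ.real (g ⁻¹' {y}) with hq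
  have hcov : ∫ ω, f ω * g ω ∂μ - (∫ ω, f ω ∂μ) * ∫ ω, g ω ∂μ =
      ∑ x ∈ s, ∑ y ∈ t, x * y * q x y := by
    rw [integral_comp_pair_of_finite_range hf' hg' s t hs ht (fun x y => x * y),
      hF (fun x => x), hG (fun y => y), Finset.sum_mul_sum, ← Finset.sum_sub_distrib]
    refine Finset.sum_congr rfl fun x _ => ?_
    rw [← Finset.sum_sub_distrib]
    refine Finset.sum_congr rfl fun y _ => ?_
    simp only [hq]; ring
  have habs : |∑ x ∈ s, ∑ y ∈ t, x * y * q x y| ≤ ∑ x ∈ s, ∑ y ∈ t, |x| * |y| * |q x y| := by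
    refine (Finset.abs_sum_le_sum_abs _ _).trans (Finset.sum_le_sum fun x _ => ?_)
    refine (Finset.abs_sum_le_sum_abs _ _).trans (Finset.sum_le_sum fun y _ => ?_)
    rw [abs_mul, abs_mul]
  have hrow : ∀ x, ∑ y ∈ t, |q x y| ≤ 2 * φ * μ.real (f ⁻¹' {x}) := fun x =>
    sum_abs_joint_sub_prod_le h₁ h₂ hφ hg t (hf (measurableSet_singleton x))
  have hcol : ∀ y, ∑ x ∈ s, |q x y| ≤ 2 * μ.real (g ⁻¹' {y}) := by
    intro y
    calc ∑ x ∈ s, |q x y| ≤ ∑ x ∈ s, (μ.real (f ⁻¹' {x} ∩ g ⁻¹' {y}) +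
          μ.real (f ⁻¹' {x}) * μ.real (g ⁻¹' {y})) := by
          refine Finset.sum_le_sum fun x _ => (abs_sub _ _).trans ?_
          rw [abs_of_nonneg measureReal_nonneg,
            abs_of_nonneg (mul_nonneg measureReal_nonneg measureReal_nonneg)]
      _ = 2 * μ.real (g ⁻¹' {y}) := by
          rw [Finset.sum_add_distrib, hβ, ← Finset.sum_mul, hsum]; ring
  refine ⟨?_, fun K hK => ?_⟩
  · rw [hcov]
    refine habs.trans ?_
    have h2 : ∑ x ∈ s, ∑ y ∈ t, x ^ 2 * |q x y| ≤ 2 * φ * ∫ ω, f ω ^ 2 ∂μ := by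
      rw [hF (fun x => x ^ 2), Finset.mul_sum]
      refine Finset.sum_le_sum fun x _ => ?_
      rw [← Finset.mul_sum]
      nlinarith [hrow x, sq_nonneg x, mul_le_mul_of_nonneg_left (hrow x) (sq_nonneg x)]
    have h3 : ∑ x ∈ s, ∑ y ∈ t, y ^ 2 * |q x y| ≤ 2 * ∫ ω, g ω ^ 2 ∂μ := by
      rw [hG (fun x => x ^ 2), Finset.mul_sum, Finset.sum_comm]
      refine Finset.sum_le_sum fun y _ => ?_
      rw [← Finset.mul_sum]
      nlinarith [hcol y, mul_le_mul_of_nonneg_left (hcol y) (sq_nonneg y)]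
    rw [← Finset.sum_product'] at h2 h3 ⊢
    have hcs := Finset.sum_mul_sq_le_sq_mul_sq (s ×ˢ t)
      (fun z : ℝ × ℝ => |z.1| * √|q z.1 z.2|) (fun z => |z.2| * √|q z.1 z.2|)
    simp only [mul_pow, sq_abs, Real.sq_sqrt (abs_nonneg _)] at hcs
    have heq : ∑ z ∈ s ×ˢ t, |z.1| * √|q z.1 z.2| * (|z.2| * √|q z.1 z.2|) =
        ∑ z ∈ s ×ˢ t, |z.1| * |z.2| * |q z.1 z.2| := by
      refine Finset.sum_congr rfl fun z _ => ?_
      have := Real.mul_self_sqrt (abs_nonneg (q z.1 z.2))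
      linear_combination |z.1| * |z.2| * this
    rw [heq] at hcs
    have hf2 : 0 ≤ ∫ ω, f ω ^ 2 ∂μ := integral_nonneg fun ω => sq_nonneg _
    have hg2 : 0 ≤ ∫ ω, g ω ^ 2 ∂μ := integral_nonneg fun ω => sq_nonneg _
    refine abs_le_of_sq_le_sq' ?_ (by positivity) |>.2
    refine hcs.trans ?_
    rw [mul_pow, mul_pow, mul_pow, Real.sq_sqrt hφ0, Real.sq_sqrt hf2, Real.sq_sqrt hg2]
    calc _ ≤ (2 * φ * ∫ ω, f ω ^ 2 ∂μ) * (2 * ∫ ω, g ω ^ 2 ∂μ) :=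
          mul_le_mul h2 h3 (Finset.sum_nonneg fun z _ => by positivity) (by positivity)
      _ = _ := by ring
  · rw [hcov]
    refine habs.trans ?_
    rw [hF (fun x => |x|), Finset.mul_sum]
    refine Finset.sum_le_sum fun x _ => ?_
    have hK0 : ∀ y ∈ t, |x| * |y| * |q x y| ≤ |x| * K * |q x y| := fun y hy => by
      have := hK y hy
      gcongr
    refine (Finset.sum_le_sum hK0).trans ?_
    rw [← Finset.mul_sum]
    obtain ⟨ω⟩ : Nonempty Ω := nonempty_of_isProbabilityMeasure μ
    have hKn : 0 ≤ K := (abs_nonneg _).trans (hK _ (ht ω))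
    calc _ ≤ |x| * K * (2 * φ * μ.real (f ⁻¹' {x})) :=
          mul_le_mul_of_nonneg_left (hrow x) (by positivity)
      _ = _ := by ring

/-- The two covariance inequalities under `φ`-mixing, for bounded functions. -/
lemma abs_cov_le_of_bounded (h₁ : m₁ ≤ mΩ) (h₂ : m₂ ≤ mΩ) {φ : ℝ}
    (hφ0 : 0 ≤ φ)
    (hφ : ∀ A B, MeasurableSet[m₁] A → MeasurableSet[m₂] B →
      |μ.real (A ∩ B) - μ.real A * μ.real B| ≤ φ * μ.real A)
    {f g : Ω → ℝ} (hf : Measurable[m₁] f) (hg : Measurable[m₂] g)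
    {L K : ℝ} (hL : ∀ ω, |f ω| ≤ L) (hK : ∀ ω, |g ω| ≤ K) :
    |∫ ω, f ω * g ω ∂μ - (∫ ω, f ω ∂μ) * ∫ ω, g ω ∂μ| ≤
        2 * √φ * √(∫ ω, f ω ^ 2 ∂μ) * √(∫ ω, g ω ^ 2 ∂μ) ∧
    |∫ ω, f ω * g ω ∂μ - (∫ ω, f ω ∂μ) * ∫ ω, g ω ∂μ| ≤ 2 * φ * K * ∫ ω, |f ω| ∂μ := by
  obtain ⟨ω₀⟩ : Nonempty Ω := nonempty_of_isProbabilityMeasure μ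
  have hL0 : 0 ≤ L := (abs_nonneg _).trans (hL ω₀)
  have hK0 : 0 ≤ K := (abs_nonneg _).trans (hK ω₀)
  have sf : StronglyMeasurable[m₁] f := hf.stronglyMeasurable
  have sg : StronglyMeasurable[m₂] g := hg.stronglyMeasurable
  set F : ℕ → Ω → ℝ := fun n => sf.approxBounded L n with hFdef
  set G : ℕ → Ω → ℝ := fun n => sg.approxBounded K n with hGdef
  have hFm : ∀ n, Measurable[m₁] (F n) := fun n => @SimpleFunc.measurable _ _ m₁ _ (sf.approxBounded L n)
  have hGm : ∀ n, Measurable[m₂] (G n) := fun n => @SimpleFunc.measurable _ _ m₂ _ (sg.approxBounded K n)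
  have hFm' : ∀ n, Measurable (F n) := fun n => (hFm n).mono h₁ le_rfl
  have hGm' : ∀ n, Measurable (G n) := fun n => (hGm n).mono h₂ le_rfl
  have hFb : ∀ n ω, |F n ω| ≤ L := fun n ω => sf.norm_approxBounded_le hL0 n ω
  have hGb : ∀ n ω, |G n ω| ≤ K := fun n ω => sg.norm_approxBounded_le hK0 n ω
  have hFt : ∀ ω, Filter.Tendsto (fun n => F n ω) Filter.atTop (nhds (f ω)) := fun ω =>
    sf.tendsto_approxBounded_of_norm_le (hL ω)
  have hGt : ∀ ω, Filter.Tendsto (fun n => G n ω) Filter.atTop (nhds (g ω)) := fun ω =>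
    sg.tendsto_approxBounded_of_norm_le (hK ω)
  have lim : ∀ (T : ℕ → Ω → ℝ) (T' : Ω → ℝ) (b : ℝ), (∀ n, Measurable (T n)) →
      (∀ n ω, |T n ω| ≤ b) → (∀ ω, Filter.Tendsto (fun n => T n ω) Filter.atTop (nhds (T' ω))) →
      Filter.Tendsto (fun n => ∫ ω, T n ω ∂μ) Filter.atTop (nhds (∫ ω, T' ω ∂μ)) := by
    intro T T' b hm hb ht
    exact tendsto_integral_of_dominated_convergence (fun _ => b)
      (fun n => (hm n).aestronglyMeasurable) (integrable_const b)
      (fun n => Filter.Eventually.of_forall (hb n)) (Filter.Eventually.of_forall ht)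
  have l1 := lim (fun n ω => F n ω * G n ω) (fun ω => f ω * g ω) (L * K)
    (fun n => (hFm' n).mul (hGm' n))
    (fun n ω => by rw [abs_mul]; exact mul_le_mul (hFb n ω) (hGb n ω) (abs_nonneg _) hL0)
    (fun ω => (hFt ω).mul (hGt ω))
  have l2 := lim F f L hFm' hFb hFt
  have l3 := lim G g K hGm' hGb hGt
  have l4 := lim (fun n ω => F n ω ^ 2) (fun ω => f ω ^ 2) (L ^ 2) (fun n => (hFm' n).pow_const 2)
    (fun n ω => by rw [abs_pow]; exact pow_le_pow_left₀ (abs_nonneg _) (hFb n ω) 2)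
    (fun ω => (hFt ω).pow 2)
  have l5 := lim (fun n ω => G n ω ^ 2) (fun ω => g ω ^ 2) (K ^ 2) (fun n => (hGm' n).pow_const 2)
    (fun n ω => by rw [abs_pow]; exact pow_le_pow_left₀ (abs_nonneg _) (hGb n ω) 2)
    (fun ω => (hGt ω).pow 2)
  have l6 := lim (fun n ω => |F n ω|) (fun ω => |f ω|) L
    (fun n => measurable_abs.comp (hFm' n))
    (fun n ω => by rw [abs_abs]; exact hFb n ω) (fun ω => (hFt ω).abs)
  have hfin := fun n => abs_cov_le_of_finite_range h₁ h₂ hφ0 hφ (hFm n) (hGm n)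
    (@SimpleFunc.range _ _ m₁ (sf.approxBounded L n)) (@SimpleFunc.range _ _ m₂ (sg.approxBounded K n))
    (fun ω => @SimpleFunc.mem_range_self _ _ m₁ _ ω) (fun ω => @SimpleFunc.mem_range_self _ _ m₂ _ ω)
  refine ⟨le_of_tendsto_of_tendsto' (l1.sub (l2.mul l3)).abs
    ((l4.sqrt.const_mul _).mul l5.sqrt) fun n => (hfin n).1,
    le_of_tendsto_of_tendsto' (l1.sub (l2.mul l3)).abs (l6.const_mul _) fun n => (hfin n).2 K ?_⟩
  intro y hy
  obtain ⟨ω, rfl⟩ := (@SimpleFunc.mem_range _ _ m₂ _ _).1 hy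
  exact hGb n ω

end Covariance

section Mixing

set_option linter.unusedSectionVars false

variable {Ω : Type*}

/-- The σ-algebra generated by `X 1, …, X k`. -/
abbrev pastSigma (X : ℕ → Ω → ℝ) (k : ℕ) : MeasurableSpace Ω :=
  ⨆ i ∈ Set.Icc 1 k, MeasurableSpace.comap (X i) inferInstance

/-- The σ-algebra generated by `X k, X (k + 1), …`. -/
abbrev futureSigma (X : ℕ → Ω → ℝ) (k : ℕ) : MeasurableSpace Ω :=
  ⨆ i ∈ Set.Ici k, MeasurableSpace.comap (X i) inferInstance

/-- The sum of `m` consecutive terms of `W`, starting with `W a`. -/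
def blockSum (W : ℕ → Ω → ℝ) (a m : ℕ) (ω : Ω) : ℝ :=
  ∑ k ∈ range m, W (a + k) ω

lemma blockSum_add (W : ℕ → Ω → ℝ) (a m m' : ℕ) (ω : Ω) :
    blockSum W a (m + m') ω = blockSum W a m ω + blockSum W (a + m) m' ω := by
  simp [blockSum, Finset.sum_range_add, add_assoc]

variable [MeasurableSpace Ω] {μ : Measure Ω} [IsProbabilityMeasure μ] {X : ℕ → Ω → ℝ}

lemma pastSigma_le (hX : ∀ n, Measurable (X n)) (k : ℕ) : pastSigma X k ≤ ‹MeasurableSpace Ω› :=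
  iSup₂_le fun i _ => (hX i).comap_le

lemma futureSigma_le (hX : ∀ n, Measurable (X n)) (k : ℕ) :
    futureSigma X k ≤ ‹MeasurableSpace Ω› :=
  iSup₂_le fun i _ => (hX i).comap_le

lemma futureSigma_anti {k j : ℕ} (h : k ≤ j) : futureSigma X j ≤ futureSigma X k :=
  biSup_mono fun _ hi => le_trans h hi

lemma phiCoef_nonneg (m : ℕ) : 0 ≤ phiCoef μ X m := by
  refine Real.sSup_nonneg ?_
  rintro x ⟨k, -, A, B, -, -, -, rfl⟩
  exact abs_nonneg _

lemma abs_joint_sub_prod_le_phiCoef {k j m : ℕ} (hk : 1 ≤ k) (hj : k + m ≤ j) (A B : Set Ω)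
    (hA : MeasurableSet[pastSigma X k] A) (hB : MeasurableSet[futureSigma X j] B) :
    |μ.real (A ∩ B) - μ.real A * μ.real B| ≤ phiCoef μ X m * μ.real A := by
  rcases eq_or_lt_of_le (zero_le (a := μ A)) with h0 | hpos
  · have hA0 : μ.real A = 0 := by simp [Measure.real, ← h0]
    have : μ.real (A ∩ B) = 0 :=
      le_antisymm ((measureReal_mono Set.inter_subset_left).trans hA0.le) measureReal_nonneg
    simp [this, hA0]
  · have hApos : 0 < μ.real A := ENNReal.toReal_pos hpos.ne' (measure_ne_top _ _)
    have hle : |(μ (B ∩ A)).toReal / (μ A).toReal - (μ B).toReal| ≤ phiCoef μ X m := by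
      refine le_csSup ⟨1, ?_⟩ ⟨k, hk, A, B, hA, futureSigma_anti hj _ hB, hpos, rfl⟩
      rintro x ⟨k', -, A', B', -, -, hp, rfl⟩
      have hp' : 0 < μ.real A' := ENNReal.toReal_pos hp.ne' (measure_ne_top _ _)
      change |μ.real (B' ∩ A') / μ.real A' - μ.real B'| ≤ 1
      have h1 : μ.real (B' ∩ A') / μ.real A' ≤ 1 :=
        div_le_one_of_le₀ (measureReal_mono Set.inter_subset_right) hp'.le
      have h2 : 0 ≤ μ.real (B' ∩ A') / μ.real A' := by positivity
      have h3 : μ.real B' ≤ 1 := measureReal_le_one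
      have h4 : 0 ≤ μ.real B' := measureReal_nonneg
      rw [abs_le]
      constructor <;> linarith
    change |μ.real (B ∩ A) / μ.real A - μ.real B| ≤ phiCoef μ X m at hle
    have heq : μ.real (A ∩ B) - μ.real A * μ.real B =
        (μ.real (B ∩ A) / μ.real A - μ.real B) * μ.real A := by
      rw [Set.inter_comm B A]
      field_simp
    rw [heq, abs_mul, abs_of_pos hApos]
    exact mul_le_mul_of_nonneg_right hle hApos.le

/-- A sequence of centered functions of the individual variables `X k`, bounded by `B` and with
second moments at most `s`. -/
structure IsCenteredFunctional (μ : Measure Ω) (X W : ℕ → Ω → ℝ) (B s : ℝ) : Prop where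
  measurable_comap : ∀ k, Measurable[MeasurableSpace.comap (X k) inferInstance] (W k)
  abs_apply_le : ∀ k ω, |W k ω| ≤ B
  integral_eq_zero : ∀ k, ∫ ω, W k ω ∂μ = 0
  integral_sq_le : ∀ k, ∫ ω, W k ω ^ 2 ∂μ ≤ s

namespace IsCenteredFunctional

variable {W : ℕ → Ω → ℝ} {B s : ℝ}

lemma measurable_past (hW : IsCenteredFunctional μ X W B s) {a m k : ℕ} (ha : 1 ≤ a)
    (hk : a + m ≤ k + 1) : Measurable[pastSigma X k] (blockSum W a m) := by
  refine Finset.measurable_fun_sum _ fun i hi => ?_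
  have hi' := Finset.mem_range.1 hi
  exact (hW.measurable_comap (a + i)).mono
    (le_iSup₂_of_le (a + i) ⟨by omega, by omega⟩ le_rfl) le_rfl

lemma measurable_future (hW : IsCenteredFunctional μ X W B s) {a m k : ℕ} (ha : k ≤ a) :
    Measurable[futureSigma X k] (blockSum W a m) := by
  refine Finset.measurable_fun_sum _ fun i hi => ?_
  exact (hW.measurable_comap (a + i)).mono
    (le_iSup₂_of_le (a + i) (Set.mem_Ici.2 (by omega)) le_rfl) le_rfl

lemma measurable_blockSum (hW : IsCenteredFunctional μ X W B s) (hX : ∀ n, Measurable (X n))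
    (a m : ℕ) : Measurable (blockSum W a m) :=
  (hW.measurable_future le_rfl).mono (futureSigma_le hX a) le_rfl

lemma measurable (hW : IsCenteredFunctional μ X W B s) (hX : ∀ n, Measurable (X n))
    (k : ℕ) : Measurable (W k) :=
  (hW.measurable_comap k).mono (hX k).comap_le le_rfl

lemma abs_blockSum_le (hW : IsCenteredFunctional μ X W B s) (a m : ℕ) (ω : Ω) :
    |blockSum W a m ω| ≤ m * B := by
  refine (Finset.abs_sum_le_sum_abs _ _).trans ?_
  refine (Finset.sum_le_sum fun i _ => hW.abs_apply_le (a + i) ω).trans ?_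
  simp

lemma bound_nonneg (hW : IsCenteredFunctional μ X W B s) : 0 ≤ B := by
  obtain ⟨ω⟩ : Nonempty Ω := nonempty_of_isProbabilityMeasure μ
  exact (abs_nonneg _).trans (hW.abs_apply_le 0 ω)

lemma second_moment_nonneg (hW : IsCenteredFunctional μ X W B s) : 0 ≤ s :=
  (integral_nonneg fun _ => sq_nonneg _).trans (hW.integral_sq_le 0)

lemma integral_mul_le (hW : IsCenteredFunctional μ X W B s) (hX : ∀ n, Measurable (X n))
    {i m : ℕ} (hi : 1 ≤ i) :
    ∫ ω, W i ω * W (i + m) ω ∂μ ≤ 2 * √(phiCoef μ X m) * s := by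
  have hs := hW.second_moment_nonneg
  have hp : Measurable[pastSigma X i] (W i) :=
    (hW.measurable_comap i).mono (le_iSup₂_of_le i ⟨hi, le_rfl⟩ le_rfl) le_rfl
  have hf : Measurable[futureSigma X (i + m)] (W (i + m)) :=
    (hW.measurable_comap _).mono (le_iSup₂_of_le (i + m) (Set.mem_Ici.2 le_rfl) le_rfl) le_rfl
  have h := (abs_cov_le_of_bounded (pastSigma_le hX i) (futureSigma_le hX (i + m))
    (phiCoef_nonneg (μ := μ) (X := X) m) (abs_joint_sub_prod_le_phiCoef hi le_rfl) hp hf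
    (hW.abs_apply_le i) (hW.abs_apply_le (i + m))).1
  rw [hW.integral_eq_zero i, zero_mul, sub_zero] at h
  refine ((le_abs_self _).trans h).trans ?_
  have h1 := Real.sqrt_le_sqrt (hW.integral_sq_le i)
  have h2 := Real.sqrt_le_sqrt (hW.integral_sq_le (i + m))
  calc _ ≤ 2 * √(phiCoef μ X m) * √s * √s := by gcongr
    _ = _ := by rw [mul_assoc, Real.mul_self_sqrt hs]

lemma integral_blockSum_sq_le (hW : IsCenteredFunctional μ X W B s)
    (hX : ∀ n, Measurable (X n)) (hsum : Summable fun m : ℕ => √(phiCoef μ X (m + 1)))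
    {a : ℕ} (ha : 1 ≤ a) (m : ℕ) :
    ∫ ω, blockSum W a m ω ^ 2 ∂μ ≤ m * (s * (1 + 4 * phiSum μ X)) := by
  have hs := hW.second_moment_nonneg
  have hbd : ∀ {F : Ω → ℝ} (K : ℝ), Measurable F → (∀ ω, |F ω| ≤ K) → Integrable F μ :=
    fun K hF hK => Integrable.of_bound hF.aestronglyMeasurable K
      (Filter.Eventually.of_forall hK)
  have hB := hW.bound_nonneg
  induction m with
  | zero => simp [blockSum]
  | succ m ih =>
    have hexp : ∀ ω, blockSum W a (m + 1) ω ^ 2 = blockSum W a m ω ^ 2 +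
        (2 * ∑ k ∈ range m, W (a + k) ω * W (a + m) ω) + W (a + m) ω ^ 2 := by
      intro ω
      simp only [blockSum]
      rw [Finset.sum_range_succ, ← Finset.sum_mul]
      ring
    have hmul : ∀ k, Integrable (fun ω => W (a + k) ω * W (a + m) ω) μ := fun k =>
      hbd (B * B) ((hW.measurable hX _).mul (hW.measurable hX _)) fun ω => by
        rw [abs_mul]
        exact mul_le_mul (hW.abs_apply_le _ _) (hW.abs_apply_le _ _) (abs_nonneg _) hB
    have i1 : Integrable (fun ω => blockSum W a m ω ^ 2) μ :=
      hbd ((m * B) ^ 2) ((hW.measurable_blockSum hX a m).pow_const 2) fun ω => by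
        rw [abs_pow]
        exact pow_le_pow_left₀ (abs_nonneg _) (hW.abs_blockSum_le a m ω) 2
    have i2 : Integrable (fun ω => 2 * ∑ k ∈ range m, W (a + k) ω * W (a + m) ω) μ :=
      (integrable_finsetSum _ fun k _ => hmul k).const_mul 2
    have i3 : Integrable (fun ω => W (a + m) ω ^ 2) μ :=
      hbd (B ^ 2) ((hW.measurable hX _).pow_const 2) fun ω => by
        rw [abs_pow]
        exact pow_le_pow_left₀ (abs_nonneg _) (hW.abs_apply_le _ ω) 2
    have i12 : Integrable (fun ω => blockSum W a m ω ^ 2 +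
        2 * ∑ k ∈ range m, W (a + k) ω * W (a + m) ω) μ := i1.add i2
    simp_rw [hexp]
    rw [integral_add i12 i3, integral_add i1 i2, integral_const_mul,
      integral_finsetSum _ fun k _ => hmul k]
    have hcross : ∑ k ∈ range m, ∫ ω, W (a + k) ω * W (a + m) ω ∂μ ≤ 2 * phiSum μ X * s := by
      calc _ ≤ ∑ k ∈ range m, 2 * √(phiCoef μ X (m - 1 - k + 1)) * s := by
            refine Finset.sum_le_sum fun k hk => ?_
            have hk' := Finset.mem_range.1 hk
            have := hW.integral_mul_le hX (i := a + k) (m := m - 1 - k + 1) (by omega)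
            rwa [show a + k + (m - 1 - k + 1) = a + m by omega] at this
        _ = ∑ k ∈ range m, 2 * √(phiCoef μ X (k + 1)) * s :=
            Finset.sum_range_reflect (fun k => 2 * √(phiCoef μ X (k + 1)) * s) m
        _ = 2 * (∑ k ∈ range m, √(phiCoef μ X (k + 1))) * s := by
            rw [← Finset.sum_mul, Finset.mul_sum]
        _ ≤ 2 * phiSum μ X * s := by
            gcongr
            exact hsum.sum_le_tsum _ fun _ _ => Real.sqrt_nonneg _
    have := hW.integral_sq_le (a + m)
    push_cast
    linarith

lemma measure_abs_blockSum_gt_le (hW : IsCenteredFunctional μ X W B s)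
    (hX : ∀ n, Measurable (X n)) (hsum : Summable fun m : ℕ => √(phiCoef μ X (m + 1)))
    {a : ℕ} (ha : 1 ≤ a) (m : ℕ) {η : ℝ} (hη : 0 < η) :
    μ.real {ω | η < |blockSum W a m ω|} ≤ m * (s * (1 + 4 * phiSum μ X)) / η ^ 2 := by
  have hi : Integrable (fun ω => blockSum W a m ω ^ 2) μ :=
    Integrable.of_bound ((hW.measurable_blockSum hX a m).pow_const 2).aestronglyMeasurable
      ((m * B) ^ 2) (Filter.Eventually.of_forall fun ω => by
        rw [Real.norm_eq_abs, abs_pow]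
        exact pow_le_pow_left₀ (abs_nonneg _) (hW.abs_blockSum_le a m ω) 2)
  have h := mul_meas_ge_le_integral_of_nonneg
    (Filter.Eventually.of_forall fun ω => sq_nonneg (blockSum W a m ω)) hi (η ^ 2)
  rw [le_div_iff₀ (by positivity), mul_comm]
  refine le_trans ?_ (h.trans (hW.integral_blockSum_sq_le hX hsum ha m))
  refine mul_le_mul_of_nonneg_left (measureReal_mono fun ω hω => ?_) (by positivity)
  have : η < |blockSum W a m ω| := hω
  change η ^ 2 ≤ blockSum W a m ω ^ 2
  rw [← sq_abs (blockSum W a m ω)]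
  exact pow_le_pow_left₀ hη.le this.le 2

/-- A sum over `M` blocks, each bounded by `η`, exceeds `4 * η` only if two well separated parts
of it exceed `η`. -/
lemma exists_separated_of_four_mul_lt (hW : IsCenteredFunctional μ X W B s) (a M g : ℕ) {η : ℝ}
    (hη : 0 < η) (hg : g * B ≤ η) {ω : Ω} (hω : 4 * η < |blockSum W a (M * g) ω|) :
    ∃ i ∈ range M, i + 2 ≤ M ∧ η < |blockSum W a ((i + 1) * g) ω| ∧
      η < |blockSum W (a + (i + 2) * g) ((M - (i + 2)) * g) ω| := by
  classical
  have hinc : ∀ i, |blockSum W a ((i + 1) * g) ω| ≤ |blockSum W a (i * g) ω| + η := by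
    intro i
    rw [add_mul, one_mul, blockSum_add]
    exact (abs_add_le _ _).trans
      (add_le_add_right ((hW.abs_blockSum_le _ g ω).trans hg) _)
  have hex : ∃ i, η < |blockSum W a (i * g) ω| := ⟨M, by linarith⟩
  obtain ⟨i, hi⟩ : ∃ i, Nat.find hex = i + 1 := by
    refine Nat.exists_eq_succ_of_ne_zero fun h0 => ?_
    have := Nat.find_spec hex
    rw [h0] at this
    simp [blockSum] at this
    linarith
  have h1 : η < |blockSum W a ((i + 1) * g) ω| := hi ▸ Nat.find_spec hex
  have h0 : |blockSum W a (i * g) ω| ≤ η := not_lt.1 (Nat.find_min hex (by omega))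
  have hM : i + 1 ≤ M := hi ▸ Nat.find_min' hex (by linarith)
  have h1' := hinc i
  have h2' := hinc (i + 1)
  have hM' : i + 2 ≤ M := by
    rcases hM.eq_or_lt with h | h
    · rw [← h] at hω
      linarith
    · omega
  refine ⟨i, Finset.mem_range.2 (by omega), hM', h1, ?_⟩
  have hsplit : blockSum W a (M * g) ω = blockSum W a ((i + 1 + 1) * g) ω +
      blockSum W (a + (i + 2) * g) ((M - (i + 2)) * g) ω := by
    rw [← blockSum_add, ← add_mul]
    congr 2
    omega
  have := abs_add_le (blockSum W a ((i + 1 + 1) * g) ω)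
    (blockSum W (a + (i + 2) * g) ((M - (i + 2)) * g) ω)
  rw [← hsplit] at this
  linarith

lemma measure_four_mul_lt_abs_blockSum_le (hW : IsCenteredFunctional μ X W B s)
    (hX : ∀ n, Measurable (X n)) (hsum : Summable fun m : ℕ => √(phiCoef μ X (m + 1)))
    {a : ℕ} (ha : 1 ≤ a) (M : ℕ) {g : ℕ} (hg0 : 1 ≤ g) {η : ℝ}
    (hη : 0 < η) (hg : g * B ≤ η) :
    μ.real {ω | 4 * η < |blockSum W a (M * g) ω|} ≤
      M * ((M * g : ℕ) * (s * (1 + 4 * phiSum μ X)) / η ^ 2) *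
        ((M * g : ℕ) * (s * (1 + 4 * phiSum μ X)) / η ^ 2 + phiCoef μ X g) := by
  set v := s * (1 + 4 * phiSum μ X) with hv
  have hv0 : 0 ≤ v := by
    have : 0 ≤ phiSum μ X := tsum_nonneg fun _ => Real.sqrt_nonneg _
    have := hW.second_moment_nonneg
    positivity
  set P : ℕ → Set Ω := fun i => {ω | η < |blockSum W a ((i + 1) * g) ω|} with hP
  set Q : ℕ → Set Ω := fun i =>
    {ω | η < |blockSum W (a + (i + 2) * g) ((M - (i + 2)) * g) ω|} with hQ
  set w : ℝ := (M * g : ℕ) * v / η ^ 2 with hw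
  have hsub : {ω | 4 * η < |blockSum W a (M * g) ω|} ⊆
      ⋃ i ∈ (range M).filter (fun i => i + 2 ≤ M), P i ∩ Q i := by
    intro ω hω
    obtain ⟨i, hi, hiM, h1, h2⟩ := hW.exists_separated_of_four_mul_lt a M g hη hg hω
    simp only [Set.mem_iUnion]
    exact ⟨i, Finset.mem_filter.2 ⟨hi, hiM⟩, h1, h2⟩
  have hle : ∀ m : ℕ, m ≤ M * g → (m : ℝ) * v / η ^ 2 ≤ w := fun m hm => by
    rw [hw]
    gcongr
  have hphi := phiCoef_nonneg (μ := μ) (X := X) g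
  have hw0 : 0 ≤ w := by positivity
  have hPQ : ∀ i ∈ (range M).filter (fun i => i + 2 ≤ M),
      μ.real (P i ∩ Q i) ≤ w * (w + phiCoef μ X g) := by
    intro i hi
    have hiM := (Finset.mem_filter.1 hi).2
    have hpos : 1 ≤ (i + 1) * g := Nat.mul_pos (Nat.succ_pos _) hg0
    have hmP : MeasurableSet[pastSigma X (a + (i + 1) * g - 1)] (P i) :=
      (measurable_abs.comp (hW.measurable_past ha (by omega))) measurableSet_Ioi
    have hmQ : MeasurableSet[futureSigma X (a + (i + 2) * g)] (Q i) :=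
      (measurable_abs.comp (hW.measurable_future le_rfl)) measurableSet_Ioi
    have hmix := abs_joint_sub_prod_le_phiCoef (μ := μ) (X := X) (m := g)
      (k := a + (i + 1) * g - 1) (j := a + (i + 2) * g) (by omega)
      (by have : (i + 2) * g = (i + 1) * g + g := by ring
          omega) (P i) (Q i) hmP hmQ
    have hP1 : μ.real (P i) ≤ w :=
      (hW.measure_abs_blockSum_gt_le hX hsum ha _ hη).trans
        (hle _ (Nat.mul_le_mul_right _ (by omega)))
    have hQ1 : μ.real (Q i) ≤ w :=
      (hW.measure_abs_blockSum_gt_le hX hsum (by omega) _ hη).trans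
        (hle _ (Nat.mul_le_mul_right _ (by omega)))
    have h1 := (abs_le.1 hmix).2
    have h2 : μ.real (P i) * (μ.real (Q i) + phiCoef μ X g) ≤ w * (w + phiCoef μ X g) := by
      gcongr
    linarith
  calc _ ≤ μ.real (⋃ i ∈ (range M).filter (fun i => i + 2 ≤ M), P i ∩ Q i) :=
        measureReal_mono hsub (measure_ne_top _ _)
    _ ≤ ∑ i ∈ (range M).filter (fun i => i + 2 ≤ M), μ.real (P i ∩ Q i) :=
        measureReal_biUnion_finset_le _ _
    _ ≤ ∑ i ∈ (range M).filter (fun i => i + 2 ≤ M), w * (w + phiCoef μ X g) :=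
        Finset.sum_le_sum hPQ
    _ = ((range M).filter (fun i => i + 2 ≤ M)).card * (w * (w + phiCoef μ X g)) := by
        rw [Finset.sum_const, nsmul_eq_mul]
    _ ≤ M * (w * (w + phiCoef μ X g)) := by
        gcongr
        exact_mod_cast (Finset.card_filter_le _ _).trans_eq (Finset.card_range M)
    _ = _ := by ring

end IsCenteredFunctional

end Mixing

section ExponentialBound

set_option linter.unusedSectionVars false

/-- The exponential function, cut off to `0` outside `[-1/8, 1/8]`. -/
noncomputable def truncExp (z : ℝ) : ℝ := if |z| ≤ 1 / 8 then Real.exp z else 0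

lemma truncExp_nonneg (z : ℝ) : 0 ≤ truncExp z := by
  unfold truncExp
  split_ifs <;> positivity

lemma truncExp_le_two (z : ℝ) : truncExp z ≤ 2 := by
  unfold truncExp
  split_ifs with h
  · have h1 := Real.abs_exp_sub_one_le (x := z) (by linarith)
    have := (abs_le.1 h1).2
    linarith
  · norm_num

lemma measurable_truncExp : Measurable truncExp :=
  Measurable.ite (measurableSet_le measurable_abs measurable_const) Real.measurable_exp
    measurable_const

lemma truncExp_le (z : ℝ) :
    truncExp z ≤ 1 + z + 7 / 12 * z ^ 2 + if 1 / 8 < |z| then |z| else 0 := by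
  unfold truncExp
  by_cases h : |z| ≤ 1 / 8
  · rw [if_pos h, if_neg (not_lt.2 h)]
    have hb := Real.exp_bound (x := z) (by linarith) (n := 3) (by norm_num)
    simp only [Finset.sum_range_succ, Finset.sum_range_zero, Nat.factorial] at hb
    norm_num at hb
    have h2 := (abs_le.1 hb).2
    have h3 : |z| ^ 3 ≤ 1 / 8 * z ^ 2 := by
      rw [← sq_abs z, pow_succ, mul_comm]
      exact mul_le_mul_of_nonneg_right h (sq_nonneg _)
    nlinarith [sq_nonneg z]
  · rw [if_neg h, if_pos (not_le.1 h)]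
    nlinarith [neg_abs_le z, sq_nonneg z]

variable {Ω : Type*} [MeasurableSpace Ω] {μ : Measure Ω} [IsProbabilityMeasure μ]
  {X W : ℕ → Ω → ℝ} {B s : ℝ}

lemma integral_truncExp_le {U : Ω → ℝ} (hU : Measurable U) {D V : ℝ} (hD : ∀ ω, |U ω| ≤ D)
    (h0 : ∫ ω, U ω ∂μ = 0) (hV : ∫ ω, U ω ^ 2 ∂μ ≤ V) :
    ∫ ω, truncExp (U ω) ∂μ ≤ 1 + 7 / 12 * V + D * μ.real {ω | 1 / 8 < |U ω|} := by
  have hbd : ∀ {F : Ω → ℝ} (K : ℝ), Measurable F → (∀ ω, |F ω| ≤ K) → Integrable F μ :=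
    fun K hF hK => Integrable.of_bound hF.aestronglyMeasurable K
      (Filter.Eventually.of_forall hK)
  have hmS : MeasurableSet {ω | 1 / 8 < |U ω|} :=
    measurableSet_lt measurable_const (measurable_abs.comp hU)
  have i1 : Integrable U μ := hbd D hU hD
  have i2 : Integrable (fun ω => U ω ^ 2) μ := hbd (D ^ 2) (hU.pow_const 2) fun ω => by
    rw [abs_pow]
    exact pow_le_pow_left₀ (abs_nonneg _) (hD ω) 2
  have i3 : Integrable ({ω | 1 / 8 < |U ω|}.indicator fun _ => D) μ :=
    (integrable_const D).indicator hmS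
  have i4 : Integrable (fun ω => truncExp (U ω)) μ :=
    hbd 2 (measurable_truncExp.comp hU) fun ω => by
      rw [abs_of_nonneg (truncExp_nonneg _)]
      exact truncExp_le_two _
  have i5 : Integrable (fun ω => 1 + U ω) μ := (integrable_const 1).add i1
  have i6 : Integrable (fun ω => 1 + U ω + 7 / 12 * U ω ^ 2) μ := i5.add (i2.const_mul _)
  calc ∫ ω, truncExp (U ω) ∂μ ≤ ∫ ω, (1 + U ω + 7 / 12 * U ω ^ 2 +
        {ω | 1 / 8 < |U ω|}.indicator (fun _ => D) ω) ∂μ := by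
        refine integral_mono i4 (i6.add i3) fun ω => ?_
        refine (truncExp_le (U ω)).trans (add_le_add_right ?_ _)
        by_cases h : 1 / 8 < |U ω|
        · rw [if_pos h, Set.indicator_of_mem (show ω ∈ {ω | 1 / 8 < |U ω|} from h)]
          exact hD ω
        · rw [if_neg h, Set.indicator_of_notMem (show ω ∉ {ω | 1 / 8 < |U ω|} from h)]
    _ = 1 + 7 / 12 * ∫ ω, U ω ^ 2 ∂μ + D * μ.real {ω | 1 / 8 < |U ω|} := by
        rw [integral_add i6 i3, integral_add i5 (i2.const_mul _),
          integral_add (integrable_const 1) i1, h0, integral_const_mul,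
          integral_indicator_const _ hmS]
        simp [mul_comm]
    _ ≤ _ := by gcongr

namespace IsCenteredFunctional

lemma integral_blockSum (hW : IsCenteredFunctional μ X W B s) (hX : ∀ n, Measurable (X n))
    (a m : ℕ) : ∫ ω, blockSum W a m ω ∂μ = 0 := by
  simp only [blockSum]
  rw [integral_finsetSum _ fun i _ =>
    Integrable.of_bound (hW.measurable hX (a + i)).aestronglyMeasurable B
      (Filter.Eventually.of_forall (hW.abs_apply_le (a + i)))]
  exact Finset.sum_eq_zero fun i _ => hW.integral_eq_zero (a + i)

lemma integral_truncExp_blockSum_le (hW : IsCenteredFunctional μ X W B s)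
    (hX : ∀ n, Measurable (X n)) (hsum : Summable fun m : ℕ => √(phiCoef μ X (m + 1)))
    {a : ℕ} (ha : 1 ≤ a) (l : ℕ) {t π : ℝ} (ht : 0 < t)
    (hπ : μ.real {ω | 1 / (16 * t) < |blockSum W a l ω|} ≤ π) :
    ∫ ω, truncExp (2 * t * blockSum W a l ω) ∂μ ≤
      1 + 7 / 3 * t ^ 2 * (l * (s * (1 + 4 * phiSum μ X))) + 2 * t * (l * B) * π := by
  have hB := hW.bound_nonneg
  have habs : ∀ ω, |2 * t * blockSum W a l ω| = 2 * t * |blockSum W a l ω| := fun ω => by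
    rw [abs_mul, abs_of_pos (by positivity)]
  have h := integral_truncExp_le (μ := μ) (U := fun ω => 2 * t * blockSum W a l ω)
    (D := 2 * t * (l * B)) (V := 4 * t ^ 2 * (l * (s * (1 + 4 * phiSum μ X))))
    ((hW.measurable_blockSum hX a l).const_mul _)
    (fun ω => by
      rw [habs]
      exact mul_le_mul_of_nonneg_left (hW.abs_blockSum_le a l ω) (by positivity))
    (by rw [integral_const_mul, hW.integral_blockSum hX, mul_zero])
    (by
      simp_rw [mul_pow]
      rw [integral_const_mul]
      norm_num
      exact mul_le_mul_of_nonneg_left (hW.integral_blockSum_sq_le hX hsum ha l) (by positivity))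
  have hset : {ω | 1 / 8 < |2 * t * blockSum W a l ω|} =
      {ω | 1 / (16 * t) < |blockSum W a l ω|} := by
    ext ω
    simp only [Set.mem_ofPred_eq, habs]
    rw [div_lt_iff₀ (show (0:ℝ) < 16 * t by positivity)]
    constructor <;> intro h <;> linarith
  rw [hset] at h
  have h2 : 2 * t * (l * B) * μ.real {ω | 1 / (16 * t) < |blockSum W a l ω|} ≤
      2 * t * (l * B) * π := mul_le_mul_of_nonneg_left hπ (by positivity)
  linarith

lemma integral_prod_truncExp_le (hW : IsCenteredFunctional μ X W B s)
    (hX : ∀ n, Measurable (X n)) {a : ℕ} (ha : 1 ≤ a) {l : ℕ} (hl : 1 ≤ l) {t R : ℝ}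
    (hR : ∀ j, ∫ ω, truncExp (2 * t * blockSum W (a + j * (2 * l)) l ω) ∂μ ≤ R) (J : ℕ) :
    ∫ ω, ∏ j ∈ range J, truncExp (2 * t * blockSum W (a + j * (2 * l)) l ω) ∂μ ≤
      (R + 4 * phiCoef μ X l) ^ J := by
  have hφ := phiCoef_nonneg (μ := μ) (X := X) l
  have hR0 : 0 ≤ R := (integral_nonneg fun _ => truncExp_nonneg _).trans (hR 0)
  induction J with
  | zero => simp
  | succ J ih =>
    simp_rw [Finset.prod_range_succ]
    rcases Nat.eq_zero_or_pos J with rfl | hJ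
    · simp only [Finset.range_zero, Finset.prod_empty, one_mul, zero_add, pow_one]
      exact (hR 0).trans (by linarith)
    · set Z : Ω → ℝ := fun ω =>
        ∏ j ∈ range J, truncExp (2 * t * blockSum W (a + j * (2 * l)) l ω) with hZ
      set G : Ω → ℝ := fun ω => truncExp (2 * t * blockSum W (a + J * (2 * l)) l ω) with hG
      have hZ0 : ∀ ω, 0 ≤ Z ω := fun ω => Finset.prod_nonneg fun _ _ => truncExp_nonneg _
      have hZb : ∀ ω, |Z ω| ≤ 2 ^ J := fun ω => by
        rw [abs_of_nonneg (hZ0 ω)]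
        refine (Finset.prod_le_prod (fun _ _ => truncExp_nonneg _)
          fun _ _ => truncExp_le_two _).trans_eq ?_
        simp
      have hGb : ∀ ω, |G ω| ≤ 2 := fun ω => by
        rw [abs_of_nonneg (truncExp_nonneg _)]
        exact truncExp_le_two _
      have hlJ : 2 * l ≤ J * (2 * l) := Nat.le_mul_of_pos_left _ hJ
      have hmZ : Measurable[pastSigma X (a + J * (2 * l) - l)] Z := by
        refine Finset.measurable_fun_prod _ fun j hj => measurable_truncExp.comp
          ((hW.measurable_past (by omega) ?_).const_mul _)
        have hj' : j + 1 ≤ J := Finset.mem_range.1 hj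
        have : (j + 1) * (2 * l) ≤ J * (2 * l) := Nat.mul_le_mul_right _ hj'
        rw [add_mul] at this
        omega
      have hmG : Measurable[futureSigma X (a + J * (2 * l))] G :=
        measurable_truncExp.comp ((hW.measurable_future le_rfl).const_mul _)
      have hcov := (abs_cov_le_of_bounded (pastSigma_le hX _) (futureSigma_le hX _) hφ
        (abs_joint_sub_prod_le_phiCoef (k := a + J * (2 * l) - l) (j := a + J * (2 * l))
          (by omega) (by omega)) hmZ hmG hZb hGb).2
      simp_rw [abs_of_nonneg (hZ0 _)] at hcov
      have h1 := (abs_le.1 hcov).2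
      have hIZ : 0 ≤ ∫ ω, Z ω ∂μ := integral_nonneg hZ0
      calc ∫ ω, Z ω * G ω ∂μ ≤ (∫ ω, Z ω ∂μ) * (∫ ω, G ω ∂μ + 4 * phiCoef μ X l) := by
            linarith
        _ ≤ (R + 4 * phiCoef μ X l) ^ J * (R + 4 * phiCoef μ X l) := by
            have := hR J
            gcongr
            have : 0 ≤ ∫ ω, G ω ∂μ := integral_nonneg fun _ => truncExp_nonneg _
            positivity
        _ = _ := (pow_succ _ _).symm

lemma blockSum_two_mul_blocks (W : ℕ → Ω → ℝ) (a l J : ℕ) (ω : Ω) :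
    blockSum W a (J * (2 * l)) ω =
      ∑ j ∈ range J, blockSum W (a + j * (2 * l)) l ω +
        ∑ j ∈ range J, blockSum W (a + l + j * (2 * l)) l ω := by
  induction J with
  | zero => simp [blockSum]
  | succ J ih =>
    rw [add_mul, one_mul, blockSum_add, ih, Finset.sum_range_succ, Finset.sum_range_succ,
      two_mul l, blockSum_add, show a + J * (l + l) + l = a + l + J * (l + l) by ring]
    ring

/-- Exponential tail bound for the sum of `2 * J` blocks of length `M * g`. -/
lemma measure_le_blockSum_le (hW : IsCenteredFunctional μ X W B s)
    (hX : ∀ n, Measurable (X n)) (hsum : Summable fun m : ℕ => √(phiCoef μ X (m + 1)))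
    {M g : ℕ} (hM : 1 ≤ M) (hg : 1 ≤ g) (J : ℕ) {t v w π : ℝ} (ht : 0 < t)
    (hgB : g * B ≤ 1 / (64 * t)) (hv : v = s * (1 + 4 * phiSum μ X))
    (hw : w = 4096 * t ^ 2 * ((M * g : ℕ) * v)) (hπ : π = M * w * (w + phiCoef μ X g)) (x : ℝ) :
    μ.real {ω | x ≤ blockSum W 1 (J * (2 * (M * g))) ω} ≤ 2 * J * π +
      Real.exp (-(t * x) + J * (7 / 3 * t ^ 2 * ((M * g : ℕ) * v) +
        2 * t * ((M * g : ℕ) * B) * π + 4 * phiCoef μ X (M * g))) := by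
  set l := M * g with hl
  have hl1 : 1 ≤ l := Nat.mul_pos hM hg
  have htail : ∀ a, 1 ≤ a → μ.real {ω | 1 / (16 * t) < |blockSum W a l ω|} ≤ π := by
    intro a ha
    have h := hW.measure_four_mul_lt_abs_blockSum_le hX hsum ha M hg
      (η := 1 / (64 * t)) (by positivity) hgB
    have e1 : 4 * (1 / (64 * t)) = 1 / (16 * t) := by field_simp; norm_num
    have e2 : (l : ℝ) * v / (1 / (64 * t)) ^ 2 = w := by rw [hw]; field_simp; norm_num
    rw [e1, ← hl, ← hv, e2] at h
    rw [hπ]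
    exact h
  set R : ℝ := 1 + 7 / 3 * t ^ 2 * (l * v) + 2 * t * (l * B) * π with hR
  have hRle : ∀ a, 1 ≤ a → ∫ ω, truncExp (2 * t * blockSum W a l ω) ∂μ ≤ R := by
    intro a ha
    have := hW.integral_truncExp_blockSum_le hX hsum ha l ht (htail a ha)
    rwa [← hv] at this
  have hφ := phiCoef_nonneg (μ := μ) (X := X) l
  have hR0 : 0 ≤ R := (integral_nonneg fun _ => truncExp_nonneg _).trans (hRle 1 le_rfl)
  set Z : ℕ → Ω → ℝ := fun a ω =>
    ∏ j ∈ range J, truncExp (2 * t * blockSum W (a + j * (2 * l)) l ω) with hZ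
  set E : ℝ := Real.exp (J * (7 / 3 * t ^ 2 * (l * v) + 2 * t * (l * B) * π +
    4 * phiCoef μ X l)) with hE
  have hZle : ∀ a, 1 ≤ a → ∫ ω, Z a ω ∂μ ≤ E := by
    intro a ha
    refine (hW.integral_prod_truncExp_le hX ha hl1 (fun j => hRle _ (by omega)) J).trans ?_
    rw [hE, Real.exp_nat_mul]
    refine pow_le_pow_left₀ (by positivity) ?_ J
    refine le_trans (le_of_eq ?_) (Real.add_one_le_exp _)
    rw [hR]; ring
  have hZ0 : ∀ a ω, 0 ≤ Z a ω := fun a ω => Finset.prod_nonneg fun _ _ => truncExp_nonneg _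
  have hZi : ∀ a, Integrable (Z a) μ := fun a => by
    refine Integrable.of_bound (Finset.measurable_fun_prod _ fun j _ => measurable_truncExp.comp
      ((hW.measurable_blockSum hX _ l).const_mul _)).aestronglyMeasurable (2 ^ J)
      (Filter.Eventually.of_forall fun ω => ?_)
    rw [Real.norm_eq_abs, abs_of_nonneg (hZ0 a ω)]
    refine (Finset.prod_le_prod (fun _ _ => truncExp_nonneg _)
      fun _ _ => truncExp_le_two _).trans_eq ?_
    simp
  set bad : ℕ → Set Ω := fun a =>
    ⋃ j ∈ range J, {ω | 1 / (16 * t) < |blockSum W (a + j * (2 * l)) l ω|} with hbad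
  have hbadle : ∀ a, 1 ≤ a → μ.real (bad a) ≤ J * π := by
    intro a ha
    refine (measureReal_biUnion_finset_le _ _).trans ?_
    refine (Finset.sum_le_sum fun j _ => htail (a + j * (2 * l)) (by omega)).trans_eq ?_
    simp
  have hgood : ∀ a ω, ω ∉ bad a →
      Z a ω = Real.exp (2 * t * ∑ j ∈ range J, blockSum W (a + j * (2 * l)) l ω) := by
    intro a ω hω
    rw [Finset.mul_sum, Real.exp_sum]
    refine Finset.prod_congr rfl fun j hj => ?_
    simp only [hbad, Set.mem_iUnion, not_exists] at hω
    have h1 : |blockSum W (a + j * (2 * l)) l ω| ≤ 1 / (16 * t) := not_lt.1 (hω j hj)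
    rw [le_div_iff₀ (by positivity)] at h1
    refine if_pos ?_
    rw [abs_mul, abs_of_pos (show 0 < 2 * t by positivity)]
    linarith
  have hsub : {ω | x ≤ blockSum W 1 (J * (2 * l)) ω} ⊆ (bad 1 ∪ bad (1 + l)) ∪
      {ω | Real.exp (t * x) ≤ (Z 1 ω + Z (1 + l) ω) / 2} := by
    intro ω hω
    by_cases hb : ω ∈ bad 1 ∪ bad (1 + l)
    · exact Or.inl hb
    · right
      rw [Set.mem_union, not_or] at hb
      have hω' : x ≤ blockSum W 1 (J * (2 * l)) ω := hω
      rw [blockSum_two_mul_blocks] at hω'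
      rw [Set.mem_ofPred_eq, hgood 1 ω hb.1, hgood (1 + l) ω hb.2]
      set p := ∑ j ∈ range J, blockSum W (1 + j * (2 * l)) l ω
      set q := ∑ j ∈ range J, blockSum W (1 + l + j * (2 * l)) l ω
      have hexp : Real.exp (t * x) ≤ Real.exp (t * p) * Real.exp (t * q) := by
        rw [← Real.exp_add, Real.exp_le_exp, ← mul_add]
        exact mul_le_mul_of_nonneg_left hω' ht.le
      have e1 : Real.exp (2 * t * p) = Real.exp (t * p) ^ 2 := by
        rw [← Real.exp_nat_mul]; congr 1; push_cast; ring
      have e2 : Real.exp (2 * t * q) = Real.exp (t * q) ^ 2 := by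
        rw [← Real.exp_nat_mul]; congr 1; push_cast; ring
      rw [e1, e2]
      nlinarith [sq_nonneg (Real.exp (t * p) - Real.exp (t * q))]
  have hmarkov : μ.real {ω | Real.exp (t * x) ≤ (Z 1 ω + Z (1 + l) ω) / 2} ≤
      Real.exp (-(t * x)) * E := by
    have h := mul_meas_ge_le_integral_of_nonneg (μ := μ) (f := fun ω => (Z 1 ω + Z (1 + l) ω) / 2)
      (Filter.Eventually.of_forall fun ω => by
        have h1 := hZ0 1 ω
        have h2 := hZ0 (1 + l) ω
        change 0 ≤ (Z 1 ω + Z (1 + l) ω) / 2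
        positivity) (((hZi 1).add (hZi (1 + l))).div_const 2) (Real.exp (t * x))
    rw [integral_div, integral_add (hZi 1) (hZi (1 + l))] at h
    have h1 := hZle 1 le_rfl
    have h2 := hZle (1 + l) (by omega)
    rw [Real.exp_neg, ← div_eq_inv_mul, le_div_iff₀ (Real.exp_pos _), mul_comm]
    exact h.trans (by linarith)
  calc _ ≤ μ.real ((bad 1 ∪ bad (1 + l)) ∪
        {ω | Real.exp (t * x) ≤ (Z 1 ω + Z (1 + l) ω) / 2}) :=
        measureReal_mono hsub (measure_ne_top _ _)
    _ ≤ μ.real (bad 1) + μ.real (bad (1 + l)) +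
        μ.real {ω | Real.exp (t * x) ≤ (Z 1 ω + Z (1 + l) ω) / 2} :=
        (measureReal_union_le _ _).trans (add_le_add_left (measureReal_union_le _ _) _)
    _ ≤ J * π + J * π + Real.exp (-(t * x)) * E := by
        have h1 := hbadle 1 le_rfl
        have h2 := hbadle (1 + l) (by omega)
        linarith
    _ = _ := by
        rw [Real.exp_add, hE]; ring

end IsCenteredFunctional

end ExponentialBound

section MainPart

set_option linter.unusedSectionVars false

variable {Ω : Type*} [MeasurableSpace Ω] {μ : Measure Ω} [IsProbabilityMeasure μ]
  {X : ℕ → Ω → ℝ}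

lemma summable_sqrt_phiCoef {r C : ℝ} (hr : 2 < r)
    (hmix : ∀ m : ℕ, 1 ≤ m → phiCoef μ X m ≤ C * ((m : ℝ) + 1) ^ (-r)) :
    Summable fun m : ℕ => √(phiCoef μ X (m + 1)) := by
  have hs : Summable fun m : ℕ => √C * ((m + 2 : ℕ) : ℝ) ^ (-(r / 2)) :=
    ((summable_nat_add_iff 2).2
      (Real.summable_nat_rpow.2 (by linarith : -(r / 2) < -1))).mul_left _
  refine Summable.of_nonneg_of_le (fun m => Real.sqrt_nonneg _) (fun m => ?_) hs
  have hm := Real.sqrt_le_sqrt (hmix (m + 1) (by omega))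
  refine hm.trans (le_of_eq ?_)
  have hpos : (0 : ℝ) ≤ ((m + 2 : ℕ) : ℝ) := by positivity
  have hcast : ((m + 1 : ℕ) : ℝ) + 1 = ((m + 2 : ℕ) : ℝ) := by push_cast; ring
  rw [hcast, Real.sqrt_mul' _ (by positivity), Real.sqrt_eq_rpow (_ ^ (-r)), ← Real.rpow_mul hpos]
  congr 2
  ring

lemma abs_ite_abs_le_le {b : ℝ} (hb : 0 ≤ b) (y : ℝ) : |if |y| ≤ b then y else 0| ≤ b := by
  split_ifs with h
  · exact h
  · simpa using hb

lemma measurable_ite_abs_le (b : ℝ) : Measurable fun y : ℝ => if |y| ≤ b then y else 0 :=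
  Measurable.ite (measurableSet_le measurable_norm measurable_const) measurable_id
    measurable_const

lemma integrable_ite_abs_le {b : ℝ} (hb : 0 ≤ b) {Z : Ω → ℝ} (hZ : Measurable Z) :
    Integrable (fun ω => if |Z ω| ≤ b then Z ω else 0) μ :=
  Integrable.of_bound ((measurable_ite_abs_le b).comp hZ).aestronglyMeasurable b
    (Filter.Eventually.of_forall fun ω => abs_ite_abs_le_le hb (Z ω))

lemma sq_ite_abs_le_le {b α : ℝ} (hb : 0 < b) (hα1 : α < 1) (y : ℝ) :
    (if |y| ≤ b then y else 0) ^ 2 ≤ b ^ (1 - α) * |y| ^ (1 + α) := by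
  split_ifs with h
  · rcases eq_or_ne y 0 with rfl | hy
    · simp only [ne_eq, OfNat.ofNat_ne_zero, not_false_eq_true, zero_pow]
      positivity
    · have hy' : 0 < |y| := abs_pos.2 hy
      have hsq : y ^ 2 = |y| ^ (1 - α) * |y| ^ (1 + α) := by
        rw [← Real.rpow_add hy', ← sq_abs]
        norm_num
      rw [hsq]
      gcongr
  · simp only [ne_eq, OfNat.ofNat_ne_zero, not_false_eq_true, zero_pow]
    positivity

lemma integral_mainPart_sq_le {b α : ℝ} (hb : 0 < b) (hα1 : α < 1) {k : ℕ}
    (hX : Measurable (X k)) (hint : Integrable (fun ω => |X k ω| ^ (1 + α)) μ) :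
    ∫ ω, mainPart μ X b k ω ^ 2 ∂μ ≤ b ^ (1 - α) * ∫ ω, |X k ω| ^ (1 + α) ∂μ := by
  set f : Ω → ℝ := fun ω => if |X k ω| ≤ b then X k ω else 0 with hf
  have hfi : Integrable f μ := integrable_ite_abs_le hb.le hX
  have hf2 : Integrable (fun ω => f ω ^ 2) μ := by
    refine Integrable.of_bound (hfi.aestronglyMeasurable.pow 2) (b ^ 2)
      (Filter.Eventually.of_forall fun ω => ?_)
    rw [Real.norm_eq_abs, abs_pow]
    exact pow_le_pow_left₀ (abs_nonneg _) (abs_ite_abs_le_le hb.le (X k ω)) 2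
  have hexp : ∫ ω, mainPart μ X b k ω ^ 2 ∂μ = ∫ ω, f ω ^ 2 ∂μ - (∫ ω, f ω ∂μ) ^ 2 := by
    have hpt : (fun ω => mainPart μ X b k ω ^ 2) =
        fun ω => f ω ^ 2 - 2 * (∫ ω, f ω ∂μ) * f ω + (∫ ω, f ω ∂μ) ^ 2 := by
      ext ω
      simp only [mainPart, hf]
      ring
    have hdiff : Integrable (fun ω => f ω ^ 2 - 2 * (∫ ω, f ω ∂μ) * f ω) μ :=
      hf2.sub (hfi.const_mul _)
    rw [hpt, integral_add hdiff (integrable_const _), integral_sub hf2 (hfi.const_mul _), integral_const_mul, integral_const]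
    simp
    ring
  calc ∫ ω, mainPart μ X b k ω ^ 2 ∂μ ≤ ∫ ω, f ω ^ 2 ∂μ := by
        rw [hexp]; linarith [sq_nonneg (∫ ω, f ω ∂μ)]
    _ ≤ ∫ ω, b ^ (1 - α) * |X k ω| ^ (1 + α) ∂μ :=
        integral_mono hf2 (hint.const_mul _) fun ω => sq_ite_abs_le_le hb hα1 (X k ω)
    _ = _ := integral_const_mul _ _

/-- The main parts `Y_1, …, Y_n`, all multiplied by `ε` and extended by zero. -/
noncomputable def signedMainPart (μ : Measure Ω) (X : ℕ → Ω → ℝ) (b ε : ℝ) (n k : ℕ) (ω : Ω) :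
    ℝ :=
  if k ∈ Icc 1 n then ε * mainPart μ X b k ω else 0

lemma isCenteredFunctional_signedMainPart (hX : ∀ n, Measurable (X n)) {α ν b ε : ℝ}
    (hα1 : α < 1)
    (hint : ∀ n : ℕ, 1 ≤ n → Integrable (fun ω => |X n ω| ^ (1 + α)) μ)
    (hν : ∀ n : ℕ, 1 ≤ n → ∫ ω, |X n ω| ^ (1 + α) ∂μ ≤ ν) (hν0 : 0 ≤ ν)
    (hb : 0 < b) (hε : |ε| = 1) (n : ℕ) :
    IsCenteredFunctional μ X (signedMainPart μ X b ε n) (2 * b) (ν * b ^ (1 - α)) where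
  measurable_comap k := by
    unfold signedMainPart
    split_ifs
    · exact ((((measurable_ite_abs_le b).comp (comap_measurable (X k))).sub_const _).const_mul ε)
    · exact measurable_const
  abs_apply_le k ω := by
    unfold signedMainPart
    split_ifs
    · rw [abs_mul, hε, one_mul, mainPart, two_mul]
      refine (abs_sub _ _).trans (add_le_add (abs_ite_abs_le_le hb.le _) ?_)
      have h := norm_integral_le_of_norm_le_const (μ := μ) (C := b)
        (f := fun ω => if |X k ω| ≤ b then X k ω else 0)
        (Filter.Eventually.of_forall fun ω => abs_ite_abs_le_le hb.le (X k ω))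
      simpa using h
    · simpa using hb.le
  integral_eq_zero k := by
    unfold signedMainPart
    split_ifs
    · simp only [mainPart]
      rw [integral_const_mul, integral_sub (integrable_ite_abs_le hb.le (hX k))
        (integrable_const _)]
      simp
    · simp
  integral_sq_le k := by
    unfold signedMainPart
    split_ifs with hk
    · have hk1 : 1 ≤ k := (Finset.mem_Icc.1 hk).1
      have hε2 : ε ^ 2 = 1 := by rw [← sq_abs, hε, one_pow]
      simp only [mul_pow, hε2, one_mul]
      refine (integral_mainPart_sq_le hb hα1 (hX k) (hint k hk1)).trans ?_
      rw [mul_comm]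
      exact mul_le_mul_of_nonneg_right (hν k hk1) (by positivity)
    · simp only [ne_eq, OfNat.ofNat_ne_zero, not_false_eq_true, zero_pow, integral_zero]
      positivity

lemma blockSum_signedMainPart {n N : ℕ} (hN : n ≤ N) (b ε : ℝ) (ω : Ω) :
    blockSum (signedMainPart μ X b ε n) 1 N ω = ε * ∑ k ∈ Icc 1 n, mainPart μ X b k ω := by
  have hIcc : ∀ f : ℕ → ℝ, ∀ m : ℕ, ∑ k ∈ range m, f (1 + k) = ∑ k ∈ Icc 1 m, f k := by
    intro f m
    rw [Finset.range_eq_Ico, Finset.sum_Ico_add f, zero_add]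
    rfl
  rw [blockSum, hIcc (fun k => signedMainPart μ X b ε n k ω), Finset.mul_sum]
  simp only [signedMainPart]
  rw [← Finset.sum_filter]
  congr 1
  ext k
  simp only [Finset.mem_filter, Finset.mem_Icc]
  omega

end MainPart

section Asymptotics

/-- A choice of the block parameters for which the exponential bound for block sums is
asymptotically sharp enough. -/
lemma exists_block_parameters {r C c p K u : ℝ} {ψ : ℕ → ℝ} (hr : 2 < r) (hC : 0 < C)
    (hc : 0 < c) (hp : 0 < p) (hK : 0 < K) (hψ0 : ∀ m, 0 ≤ ψ m)
    (hψ : ∀ m : ℕ, 1 ≤ m → ψ m ≤ C * ((m : ℝ) + 1) ^ (-r))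
    (hu : 2 ≤ u) (huK : 128 * K ≤ u) (hup : 2 ≤ p * u ^ 11) {n : ℕ}
    (hn : (n : ℝ) = p * u ^ (6 * (1 + r))) :
    ∃ M g J : ℕ, 1 ≤ M ∧ 1 ≤ g ∧ n ≤ J * (2 * (M * g)) ∧ ∀ t v b : ℝ, 0 < t →
      t ^ 2 * v * n = 3 * c * p / 4 → t * b = K / u ^ 6 → g * (2 * b) ≤ 1 / (64 * t) ∧
      ∀ w π : ℝ, w = 4096 * t ^ 2 * ((M * g : ℕ) * v) → π = M * w * (w + ψ g) →
        2 * J * π + Real.exp (-(3 * c * p / 2) + J * (7 / 3 * t ^ 2 * ((M * g : ℕ) * v) +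
          2 * t * ((M * g : ℕ) * (2 * b)) * π + 4 * ψ (M * g))) ≤
        8 * (3072 * c * p * (6144 * c + 4 * C)) / u +
          Real.exp (-(5 * c * p / 8) +
            (7 / 2 * c + 32 * K * (3072 * c * p * (6144 * c + 4 * C)) + 16 * C * p) / u) := by
  have hu0 : 0 < u := by linarith
  have hu1 : 1 ≤ u := by linarith
  have hu5 : 1 ≤ u ^ 5 := one_le_pow₀ hu1
  have hu2 : 1 ≤ u ^ 2 := one_le_pow₀ hu1
  set g := ⌊u ^ 5⌋₊ with hg
  set M := ⌈u ^ 2⌉₊ with hM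
  set l := M * g with hl
  set J := n / (2 * l) + 1 with hJ
  have hg1 : 1 ≤ g := Nat.le_floor (by simpa using hu5)
  have hM1 : 1 ≤ M := Nat.one_le_ceil_iff.2 (by positivity)
  have hl1 : 1 ≤ l := Nat.mul_pos hM1 hg1
  have hg1R : (1 : ℝ) ≤ g := by exact_mod_cast hg1
  have hl1R : (1 : ℝ) ≤ l := by exact_mod_cast hl1
  have hgle : (g : ℝ) ≤ u ^ 5 := Nat.floor_le (by positivity)
  have hgge : u ^ 5 / 2 ≤ g := by linarith [Nat.lt_floor_add_one (u ^ 5)]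
  have hMge : u ^ 2 ≤ M := Nat.le_ceil _
  have hMle : (M : ℝ) ≤ 2 * u ^ 2 := by
    linarith [Nat.ceil_lt_add_one (show 0 ≤ u ^ 2 by positivity)]
  have hlR : (l : ℝ) = M * g := by rw [hl]; push_cast; rfl
  have hlle : (l : ℝ) ≤ 2 * u ^ 7 := by
    calc (l : ℝ) = M * g := hlR
      _ ≤ (2 * u ^ 2) * u ^ 5 := by gcongr
      _ = 2 * u ^ 7 := by ring
  have hlge : u ^ 7 / 2 ≤ l := by
    calc u ^ 7 / 2 = u ^ 2 * (u ^ 5 / 2) := by ring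
      _ ≤ (M : ℝ) * g := by gcongr
      _ = l := hlR.symm
  have hnge : p * u ^ 18 ≤ n := by
    rw [hn]
    gcongr
    rw [← Real.rpow_natCast]
    exact Real.rpow_le_rpow_of_exponent_le hu1 (by push_cast; linarith)
  have hn0 : (0 : ℝ) < n := lt_of_lt_of_le (by positivity) hnge
  have hln : (l : ℝ) / n ≤ 2 / p / u ^ 11 := by
    calc (l : ℝ) / n ≤ (2 * u ^ 7) / (p * u ^ 18) := by gcongr
      _ = 2 / p / u ^ 11 := by field_simp
  have hln1 : (l : ℝ) / n ≤ 1 := by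
    refine hln.trans ?_
    rw [div_div, div_le_one (by positivity)]
    exact hup
  have hJle : (J : ℝ) ≤ n / (2 * l) + 1 := by
    rw [hJ]; push_cast
    have := @Nat.cast_div_le ℝ _ _ _ n (2 * l)
    push_cast at this
    linarith
  have hJln : (J : ℝ) * (l / n) ≤ 1 / 2 + l / n := by
    calc (J : ℝ) * (l / n) ≤ (n / (2 * l) + 1) * (l / n) := by gcongr
      _ = 1 / 2 + l / n := by field_simp
  have hJn : (J : ℝ) ≤ 2 * n / l := by
    rw [le_div_iff₀ (by linarith)]
    have h : (J : ℝ) * (l / n) ≤ 2 := by linarith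
    rwa [← mul_div_assoc, div_le_iff₀ hn0] at h
  have hNn : n ≤ J * (2 * l) := by
    have := Nat.lt_div_mul_add (a := n) (b := 2 * l) (by omega)
    rw [hJ, add_mul, one_mul]
    omega
  have hψg : ψ g ≤ 4 * C / u ^ 10 := by
    calc ψ g ≤ C * ((g : ℝ) + 1) ^ (-r) := hψ g hg1
      _ ≤ C * ((g : ℝ) + 1) ^ (-2 : ℝ) := by
          gcongr
          · linarith
      _ = C / ((g : ℝ) + 1) ^ 2 := by
          rw [Real.rpow_neg (by positivity), ← div_eq_mul_inv]
          norm_num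
      _ ≤ C / (u ^ 5 / 2) ^ 2 := by gcongr; linarith
      _ = 4 * C / u ^ 10 := by field_simp; ring
  have hψl : J * (4 * ψ l) ≤ 16 * C * p / u := by
    have h1 : ψ l ≤ C * (l : ℝ) ^ (-r) := by
      refine (hψ l hl1).trans ?_
      gcongr ?_ * ?_
      exact Real.rpow_le_rpow_of_nonpos (by linarith) (by linarith) (by linarith)
    have h2 : (l : ℝ) ^ (-r) / l = ((l : ℝ) ^ (1 + r))⁻¹ := by
      rw [Real.rpow_neg (by positivity), Real.rpow_add (by linarith), Real.rpow_one]
      field_simp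
    have h3 : u ^ (6 * (1 + r)) = (u ^ 6) ^ (1 + r) := by
      rw [Real.rpow_mul hu0.le]
      norm_cast
    have h4 : u ^ 6 / l ≤ 2 / u := by
      calc u ^ 6 / l ≤ u ^ 6 / (u ^ 7 / 2) := by gcongr
        _ = 2 / u := by field_simp
    calc J * (4 * ψ l) ≤ (2 * n / l) * (4 * (C * (l : ℝ) ^ (-r))) := by
          have := hψ0 l
          gcongr
      _ = 8 * C * n * ((l : ℝ) ^ (-r) / l) := by ring
      _ = 8 * C * p * (u ^ 6 / l) ^ (1 + r) := by
          rw [h2, hn, h3, Real.div_rpow (by positivity) (by positivity)]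
          ring
      _ ≤ 8 * C * p * (2 / u) ^ (1 + r) := by gcongr
      _ ≤ 8 * C * p * (2 / u) ^ (1 : ℝ) := by
          gcongr 8 * C * p * ?_
          exact Real.rpow_le_rpow_of_exponent_ge (by positivity) ((div_le_one hu0).2 hu)
            (by linarith)
      _ = 16 * C * p / u := by rw [Real.rpow_one]; ring
  refine ⟨M, g, J, hM1, hg1, hNn, fun t v b ht htv htb => ⟨?_, fun w π hw hπ => ?_⟩⟩
  · rw [le_div_iff₀ (by positivity)]
    calc g * (2 * b) * (64 * t) = 128 * g * (t * b) := by ring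
      _ ≤ 128 * u ^ 5 * (K / u ^ 6) := by rw [htb]; gcongr
      _ = 128 * K / u := by field_simp
      _ ≤ 1 := (div_le_one hu0).2 huK
  · set D := 3072 * c * p with hD
    set E := 6144 * c + 4 * C with hE
    have hD0 : 0 < D := by positivity
    have hE0 : 0 < E := by positivity
    have htl : t ^ 2 * (l * v) = 3 * c * p / 4 * (l / n) := by
      rw [← htv]; field_simp
    have hwl : w = D * (l / n) := by
      rw [hw, mul_assoc, htl, hD]; ring
    have hw0 : 0 ≤ w := by rw [hwl]; positivity
    have hwle : w ≤ 6144 * c / u ^ 10 := by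
      calc w ≤ D * (2 / p / u ^ 11) := by rw [hwl]; gcongr
        _ = 6144 * c / u ^ 11 := by rw [hD]; field_simp; ring
        _ ≤ 6144 * c / u ^ 10 := by
          gcongr
          norm_num
    have hJw : J * w ≤ 2 * D := by
      calc J * w = D * (J * (l / n)) := by rw [hwl]; ring
        _ ≤ D * 2 := by gcongr; linarith
        _ = 2 * D := by ring
    have hJπ : J * π ≤ 4 * (D * E) / u ^ 8 := by
      calc J * π = M * (J * w) * (w + ψ g) := by rw [hπ]; ring
        _ ≤ (2 * u ^ 2) * (2 * D) * (6144 * c / u ^ 10 + 4 * C / u ^ 10) := by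
          have := hψ0 g
          gcongr
        _ = 4 * (D * E) / u ^ 8 := by rw [hE]; field_simp; ring
    have hπ0 : 0 ≤ J * π := by
      have := hψ0 g
      rw [hπ]; positivity
    have hfirst : 2 * J * π ≤ 8 * (D * E) / u := by
      calc 2 * J * π = 2 * (J * π) := by ring
        _ ≤ 2 * (4 * (D * E) / u ^ 8) := by gcongr
        _ = 8 * (D * E) / u ^ 8 := by ring
        _ ≤ 8 * (D * E) / u := by
          gcongr
          exact le_self_pow₀ hu1 (by norm_num)
    have hquad : J * (7 / 3 * t ^ 2 * (l * v)) ≤ 7 / 8 * (c * p) + 7 / 2 * c / u := by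
      calc J * (7 / 3 * t ^ 2 * (l * v)) = 7 / 4 * (c * p) * (J * (l / n)) := by
            rw [mul_assoc (7 / 3 : ℝ), htl]; ring
        _ ≤ 7 / 4 * (c * p) * (1 / 2 + 2 / p / u ^ 11) := by gcongr; linarith
        _ = 7 / 8 * (c * p) + 7 / 2 * c / u ^ 11 := by field_simp; ring
        _ ≤ 7 / 8 * (c * p) + 7 / 2 * c / u := by
          gcongr
          exact le_self_pow₀ hu1 (by norm_num)
    have hlin : J * (2 * t * (l * (2 * b)) * π) ≤ 32 * K * (D * E) / u := by
      calc J * (2 * t * (l * (2 * b)) * π) = 4 * l * (t * b) * (J * π) := by ring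
        _ ≤ 4 * (2 * u ^ 7) * (K / u ^ 6) * (4 * (D * E) / u ^ 8) := by
          rw [htb]; gcongr
        _ = 32 * K * (D * E) / u ^ 7 := by field_simp; ring
        _ ≤ 32 * K * (D * E) / u := by
          gcongr
          exact le_self_pow₀ hu1 (by norm_num)
    refine add_le_add hfirst (Real.exp_le_exp.2 ?_)
    rw [mul_add, mul_add, add_div, add_div]
    linarith

lemma eventually_div_add_exp_le {a b : ℝ} (E₁ E₂ : ℝ) (hab : a < b) :
    ∀ᶠ u : ℝ in Filter.atTop, E₁ / u + Real.exp (a + E₂ / u) ≤ Real.exp b := by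
  have h : Filter.Tendsto (fun u : ℝ => E₁ / u + Real.exp (a + E₂ / u)) Filter.atTop
      (nhds (0 + Real.exp (a + 0))) :=
    (Filter.tendsto_id.const_div_atTop E₁).add ((Real.continuous_exp.tendsto _).comp
      (tendsto_const_nhds.add (Filter.tendsto_id.const_div_atTop E₂)))
  rw [zero_add, add_zero] at h
  exact h.eventually_le_const (Real.exp_lt_exp.2 hab)

end Asymptotics

section OneSidedBound

variable {Ω : Type*} [MeasurableSpace Ω] {μ : Measure Ω} [IsProbabilityMeasure μ]
  {X : ℕ → Ω → ℝ}

lemma eventually_measure_le_mul_sum_mainPart_le (hX : ∀ n, Measurable (X n)) {r C : ℝ}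
    (hr : 2 < r) (hC : 0 < C)
    (hmix : ∀ m : ℕ, 1 ≤ m → phiCoef μ X m ≤ C * ((m : ℝ) + 1) ^ (-r))
    {α ν : ℝ} (hα0 : 0 < α) (hα1 : α < 1)
    (hint : ∀ n : ℕ, 1 ≤ n → Integrable (fun ω => |X n ω| ^ (1 + α)) μ)
    (hν : ∀ n : ℕ, 1 ≤ n → ∫ ω, |X n ω| ^ (1 + α) ∂μ ≤ ν) (hν0 : 0 < ν)
    {c p a₁ β lam ε : ℝ} (hc : 0 < c) (hp : 0 < p)
    (ha₁ : a₁ = √(3 * c * ν * (1 + 4 * phiSum μ X)))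
    (hβ : β = (α * r + 1) / ((1 + α) * (1 + r)))
    (hlam : lam = (r - 1) / ((1 + r) * (1 + α))) (hε : |ε| = 1) :
    ∀ᶠ n : ℕ in Filter.atTop, μ.real {ω | (n : ℝ) * (a₁ * (p / n) ^ β) ≤
      ε * ∑ k ∈ Icc 1 n, mainPart μ X (((n : ℝ) / p) ^ lam) k ω} ≤ Real.exp (-(c * p / 2)) := by
  have hφ0 : 0 ≤ phiSum μ X := tsum_nonneg fun m => Real.sqrt_nonneg _
  set V := ν * (1 + 4 * phiSum μ X) with hV
  have hV0 : 0 < V := by positivity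
  have ha₁V : a₁ ^ 2 = 3 * c * V := by
    rw [ha₁, Real.sq_sqrt (by positivity), hV]; ring
  have ha₁0 : 0 < a₁ := by rw [ha₁]; positivity
  have hu : Filter.Tendsto (fun n : ℕ => ((n : ℝ) / p) ^ (1 / (6 * (1 + r)))) Filter.atTop
      Filter.atTop :=
    (tendsto_rpow_atTop (by positivity)).comp
      (tendsto_natCast_atTop_atTop.atTop_div_const hp)
  have hup : Filter.Tendsto (fun u : ℝ => p * u ^ 11) Filter.atTop Filter.atTop :=
    (Filter.tendsto_pow_atTop (by norm_num)).const_mul_atTop hp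
  filter_upwards [hu.eventually_ge_atTop 2, hu.eventually_ge_atTop (128 * (a₁ / (2 * V))),
    hu.eventually (hup.eventually_ge_atTop 2),
    hu.eventually (eventually_div_add_exp_le
      (8 * (3072 * c * p * (6144 * c + 4 * C)))
      (7 / 2 * c + 32 * (a₁ / (2 * V)) * (3072 * c * p * (6144 * c + 4 * C)) + 16 * C * p)
      (show -(5 * c * p / 8) < -(c * p / 2) by nlinarith [mul_pos hc hp])),
    Filter.eventually_ge_atTop 1] with n hu2 huK hup hexp hn1
  set q := (n : ℝ) / p with hq
  set u := q ^ (1 / (6 * (1 + r))) with hu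
  have hn0 : (0 : ℝ) < n := by exact_mod_cast hn1
  have hq0 : 0 < q := by positivity
  have hu0 : 0 < u := by positivity
  have hnq : (n : ℝ) = p * q := by rw [hq]; field_simp
  have huq : u ^ (6 * (1 + r)) = q := by
    rw [hu, ← Real.rpow_mul hq0.le, one_div_mul_cancel (by positivity), Real.rpow_one]
  obtain ⟨M, g, J, hM, hg, hN, hblock⟩ := exists_block_parameters hr hC hc hp
    (show 0 < a₁ / (2 * V) by positivity) (phiCoef_nonneg (μ := μ) (X := X)) hmix hu2 huK hup
    (n := n) (by rw [huq, hnq])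
  set b := q ^ lam with hb
  set z := b ^ (1 - α) with hz
  set y := q ^ (-β) with hy
  have hb0 : 0 < b := by positivity
  have hz0 : 0 < z := by positivity
  have hy0 : 0 < y := by positivity
  have hzq : z = q ^ (lam * (1 - α)) := by rw [hz, hb, ← Real.rpow_mul hq0.le]
  have hyq : (p / n) ^ β = y := by
    rw [hy, Real.rpow_neg hq0.le, ← Real.inv_rpow hq0.le, hq, inv_div]
  have hyz : y ^ 2 * q = z := by
    rw [hzq, hy, ← Real.rpow_natCast, ← Real.rpow_mul hq0.le]
    nth_rw 2 [← Real.rpow_one q]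
    rw [← Real.rpow_add hq0]
    congr 1
    rw [hβ, hlam]
    push_cast
    field_simp
    ring
  have hybz : y * b * u ^ 6 = z := by
    rw [hzq, hy, hb, hu, ← Real.rpow_natCast (q ^ (1 / (6 * (1 + r)))), ← Real.rpow_mul hq0.le,
      ← Real.rpow_add hq0, ← Real.rpow_add hq0]
    congr 1
    rw [hβ, hlam]
    push_cast
    field_simp
    ring
  set t := a₁ * y / (2 * (V * z)) with ht
  have ht0 : 0 < t := by positivity
  have htv : t ^ 2 * (V * z) * n = 3 * c * p / 4 := by
    rw [ht, div_pow, mul_pow, ha₁V, hnq, ← hyz]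
    field_simp
    ring
  have htx : t * (n * (a₁ * y)) = 3 * c * p / 2 := by
    have h : t * (n * (a₁ * y)) = a₁ ^ 2 * y ^ 2 * n / (2 * (V * z)) := by rw [ht]; ring
    rw [h, ha₁V, hnq, ← hyz]
    field_simp
  have htb : t * b = a₁ / (2 * V) / u ^ 6 := by
    rw [ht, ← hybz]
    field_simp
  obtain ⟨hgB, hbound⟩ := hblock t (V * z) b ht0 htv htb
  have hW := isCenteredFunctional_signedMainPart hX hα1 hint hν hν0.le hb0 hε n
  have hmain := hW.measure_le_blockSum_le hX (summable_sqrt_phiCoef hr hmix) hM hg J ht0 hgB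
    (v := V * z) (by rw [hV]; ring) rfl rfl (n * (a₁ * y))
  simp only [blockSum_signedMainPart hN] at hmain
  rw [hyq]
  refine hmain.trans (le_trans ?_ hexp)
  rw [htx]
  exact hbound _ _ rfl rfl

end OneSidedBound

/-- inequalities (17)-(18) in the proof of Theorem 1: for the main parts
`Y_k = X_k·1(|X_k| ≤ b_n) - E(X_k·1(|X_k| ≤ b_n))` with `b_n = (n/p)^λ`, and
`δ_n = a₁ (p/n)^β`, there is `n₀` such that for `n ≥ n₀`,
`P(∑ Y_k ≥ nδ_n) ≤ Aδ^c`, `P(∑ Y_k ≤ -nδ_n) ≤ Aδ^c`, hence `P(|∑ Y_k| ≥ nδ_n) ≤ 2Aδ^c`. -/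
theorem main_part_probability_bound
    {Ω : Type*} [MeasurableSpace Ω] (μ : Measure Ω) [IsProbabilityMeasure μ]
    (X : ℕ → Ω → ℝ) (hmeas : ∀ n, Measurable (X n))
    (r C : ℝ) (hr : 2 < r) (hC : 0 < C)
    (hmix : ∀ m : ℕ, 1 ≤ m → phiCoef μ X m ≤ C * ((m : ℝ) + 1) ^ (-r))
    (α να : ℝ) (hα0 : 0 < α) (hα1 : α < 1)
    (hint : ∀ n : ℕ, 1 ≤ n → Integrable (fun ω => |X n ω| ^ (1 + α)) μ)
    (hbdd : BddAbove (Set.range fun n : ℕ => ∫ ω, |X (n + 1) ω| ^ (1 + α) ∂μ))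
    (hνα : να = ⨆ n : ℕ, ∫ ω, |X (n + 1) ω| ^ (1 + α) ∂μ) (hνpos : 0 < να)
    (c δ p φ a₁ β lam A : ℝ)
    (hc : 0 < c) (hδ : δ ∈ Set.Ioo (0:ℝ) 1)
    (hp : p = 2 * Real.log (1/δ))
    (hφ : φ = phiSum μ X)
    (ha₁ : a₁ = Real.sqrt (3 * c * να * (1 + 4 * φ)))
    (hβ : β = (α * r + 1) / ((1 + α) * (1 + r)))
    (hlam : lam = (r - 1) / ((1 + r) * (1 + α)))
    (hA : A = Real.exp (1/4 + Real.sqrt (Real.exp 1) * C * 4 ^ r)) :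
    ∃ n₀ : ℕ, 0 < n₀ ∧ ∀ n : ℕ, n₀ ≤ n →
      (μ {ω | (n:ℝ) * (a₁ * (p / n) ^ β) ≤
          ∑ k ∈ Finset.Icc 1 n, mainPart μ X (((n:ℝ) / p) ^ lam) k ω}).toReal ≤ A * δ ^ c ∧
      (μ {ω | ∑ k ∈ Finset.Icc 1 n, mainPart μ X (((n:ℝ) / p) ^ lam) k ω ≤
          -((n:ℝ) * (a₁ * (p / n) ^ β))}).toReal ≤ A * δ ^ c ∧
      (μ {ω | (n:ℝ) * (a₁ * (p / n) ^ β) ≤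
          |∑ k ∈ Finset.Icc 1 n, mainPart μ X (((n:ℝ) / p) ^ lam) k ω|}).toReal ≤
        2 * A * δ ^ c := by
  obtain ⟨hδ0, hδ1⟩ := hδ
  have hp0 : 0 < p := by
    rw [hp]
    exact mul_pos two_pos (Real.log_pos (by rw [lt_div_iff₀ hδ0]; linarith))
  have hδc : Real.exp (-(c * p / 2)) = δ ^ c := by
    rw [Real.rpow_def_of_pos hδ0, hp, one_div, Real.log_inv]
    congr 1
    ring
  have hA1 : 1 ≤ A := by
    rw [hA]
    exact Real.one_le_exp (by positivity)
  have hle : Real.exp (-(c * p / 2)) ≤ A * δ ^ c := by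
    rw [hδc]
    exact le_mul_of_one_le_left (by positivity) hA1
  have hν : ∀ n : ℕ, 1 ≤ n → ∫ ω, |X n ω| ^ (1 + α) ∂μ ≤ να := by
    intro n hn
    obtain ⟨m, rfl⟩ := Nat.exists_eq_add_of_le' hn
    rw [hνα]
    exact le_ciSup hbdd m
  subst hφ
  have hupper := eventually_measure_le_mul_sum_mainPart_le hmeas hr hC hmix hα0 hα1 hint hν hνpos
    hc hp0 ha₁ hβ hlam (ε := 1) (by simp)
  have hlower := eventually_measure_le_mul_sum_mainPart_le hmeas hr hC hmix hα0 hα1 hint hν hνpos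
    hc hp0 ha₁ hβ hlam (ε := -1) (by simp)
  obtain ⟨n₀, hn₀⟩ := Filter.eventually_atTop.1 (hupper.and hlower)
  refine ⟨n₀ + 1, n₀.succ_pos, fun n hn => ?_⟩
  obtain ⟨hup, hlow⟩ := hn₀ n (by omega)
  simp only [one_mul, neg_mul, le_neg (a := (n : ℝ) * (a₁ * (p / n) ^ β))] at hup hlow
  refine ⟨hup.trans hle, hlow.trans hle, ?_⟩
  have hunion : {ω | (n:ℝ) * (a₁ * (p / n) ^ β) ≤
      |∑ k ∈ Finset.Icc 1 n, mainPart μ X (((n:ℝ) / p) ^ lam) k ω|} =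
      {ω | (n:ℝ) * (a₁ * (p / n) ^ β) ≤
        ∑ k ∈ Finset.Icc 1 n, mainPart μ X (((n:ℝ) / p) ^ lam) k ω} ∪
      {ω | ∑ k ∈ Finset.Icc 1 n, mainPart μ X (((n:ℝ) / p) ^ lam) k ω ≤
        -((n:ℝ) * (a₁ * (p / n) ^ β))} := by
    ext ω
    simp only [Set.mem_union, Set.mem_ofPred_eq, le_abs, le_neg]
  rw [hunion]
  refine (measureReal_union_le _ _).trans ?_
  linarith
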